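/- Let x ∈ ℝ⁴ and r̄ > 0 with B̄_x(r̄) ⊆ Ω. Then the function r ↦ H_φ(x,r)/r³ is nondecreasing on (0, r̄); equivalently, for all 0 < s < r ≤ r̄ one has H_φ(x,r) ≥ (r/s)³ H_φ(x,s). -/

import Mathlib

open Metric MeasureTheory
open scoped RealInnerProductSpace

noncomputable section

abbrev E4 := EuclideanSpace ℝ (Fin 4)

variable {E : Type*} [NormedAddCommGroup E] [InnerProductSpace ℝ E] [FiniteDimensional ℝ E]

/-- `u` is smooth and harmonic (the Laplacian, i.e. the sum of the pure second
derivatives in the coordinate directions, vanishes) on `Ω`. -/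
def IsHarmonicOn (u : E4 → E) (Ω : Set E4) : Prop :=
  ContDiffOn ℝ (⊤ : ℕ∞) u Ω ∧
  ∀ x ∈ Ω, ∑ i : Fin 4,
    iteratedFDeriv ℝ 2 u x ![EuclideanSpace.single i (1:ℝ), EuclideanSpace.single i 1] = 0

/-- `|∇u(y)|²`, the squared Frobenius norm of the derivative of `u` at `y`. -/
def gradSq (u : E4 → E) (y : E4) : ℝ :=
  ∑ i : Fin 4, ‖fderiv ℝ u y (EuclideanSpace.single i (1:ℝ))‖ ^ 2

/-- `D_φ(x,r) = ∫ |∇u(y)|² φ(|y−x|/r) dy`. -/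
def Dphi (φ : ℝ → ℝ) (u : E4 → E) (x : E4) (r : ℝ) : ℝ :=
  ∫ y, gradSq u y * φ (‖y - x‖ / r)

/-- `H_φ(x,r) = −∫ |u(y)|² |y−x|⁻¹ φ'(|y−x|/r) dy`. -/
def Hphi (φ : ℝ → ℝ) (u : E4 → E) (x : E4) (r : ℝ) : ℝ :=
  -∫ y, ‖u y‖ ^ 2 * ‖y - x‖⁻¹ * deriv φ (‖y - x‖ / r)

/-- `E_φ(x,r) = −∫ |∂_{ν_x}u(y)|² |y−x| φ'(|y−x|/r) dy`, where `ν_x(y) = (y−x)/|y−x|`. -/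
def Ephi (φ : ℝ → ℝ) (u : E4 → E) (x : E4) (r : ℝ) : ℝ :=
  -∫ y, ‖fderiv ℝ u y (‖y - x‖⁻¹ • (y - x))‖ ^ 2 * ‖y - x‖ * deriv φ (‖y - x‖ / r)

/-- The smoothed frequency `N_φ(x,r) = r D_φ(x,r) / H_φ(x,r)`. -/
def Nphi (φ : ℝ → ℝ) (u : E4 → E) (x : E4) (r : ℝ) : ℝ :=
  r * Dphi φ u x r / Hphi φ u x r

/-! Substituting `y = x + r z` gives `H_φ(x, r) = rⁿ⁻¹ M(r)` in dimension `n`, where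
`M(r) = -∫ |u(x + r z)|² |z|⁻¹ φ'(|z|) dz`. The vector field `|z|⁻¹ φ'(|z|) z` is the gradient of
the compactly supported function `φ(|z|)`, so differentiating under the integral sign and
integrating by parts gives `M'(r) = r ∫ (Δ|u|²)(x + r z) φ(|z|) dz`, which is nonnegative because
`Δ|u|² = 2|∇u|²` for harmonic `u`. -/

open Filter Topology Function InnerProductSpace
open scoped Laplacian Gradient

section LocallyRegularIntegrands

variable {X Y : Type*} [TopologicalSpace X] [TopologicalSpace Y]

theorem exists_eventually_forall_norm_le_of_isCompact {F : Type*} [SeminormedAddCommGroup F]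
    {f : X → Y → F} {x : X} {K : Set Y} (hK : IsCompact K)
    (hf : ∀ y ∈ K, ContinuousAt f.uncurry (x, y)) :
    ∃ C, ∀ᶠ x' in 𝓝 x, ∀ y ∈ K, ‖f x' y‖ ≤ C := by
  have hfx : ContinuousOn (f x) K := fun y hy ↦
    ((hf y hy).comp (f := fun y ↦ (x, y)) (by fun_prop)).continuousWithinAt
  obtain ⟨C, hC⟩ := hK.exists_bound_of_continuousOn hfx
  refine ⟨C + 1, hK.eventually_forall_of_forall_eventually fun y hy ↦ ?_⟩
  filter_upwards [(hf y hy).norm.eventually_lt_const (lt_add_of_le_of_pos (hC y hy) one_pos)]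
    with p hp using hp.le

theorem integrable_mul_of_continuousAt_tsupport [MeasurableSpace X] [OpensMeasurableSpace X]
    [R1Space X] {μ : Measure X} [IsFiniteMeasureOnCompacts μ] {f g : X → ℝ}
    (hf : ∀ y ∈ tsupport g, ContinuousAt f y) (hg : Continuous g) (hgc : HasCompactSupport g) :
    Integrable (fun y ↦ f y * g y) μ := by
  have hcont : Continuous fun y ↦ f y * g y := continuous_of_tsupport fun y hy ↦
    (hf y (tsupport_mul_subset_right hy)).mul hg.continuousAt
  exact hcont.integrable_of_hasCompactSupport hgc.mul_left

end LocallyRegularIntegrands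

section RadialFunctions

theorem continuous_inv_norm_mul_comp_norm {V : Type*} [NormedAddCommGroup V] {ψ : ℝ → ℝ}
    (hψ : Continuous ψ) (hψ₀ : ψ =ᶠ[𝓝 0] 0) : Continuous fun z : V ↦ ‖z‖⁻¹ * ψ ‖z‖ := by
  refine continuous_iff_continuousAt.2 fun z ↦ ?_
  rcases eq_or_ne z 0 with rfl | hz
  · have hzero : (fun z : V ↦ ‖z‖⁻¹ * ψ ‖z‖) =ᶠ[𝓝 0] fun _ ↦ 0 := by
      filter_upwards [tendsto_norm_zero.eventually hψ₀] with z hz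
      rw [hz, Pi.zero_apply, mul_zero]
    exact continuousAt_const.congr hzero.symm
  · exact (continuousAt_id.norm.inv₀ (norm_ne_zero_iff.2 hz)).mul (by fun_prop)

theorem tsupport_subset_closedBall_of_eq_zero_of_lt_norm {V : Type*} [SeminormedAddCommGroup V]
    {f : V → ℝ} {R : ℝ} (hf : ∀ z, R < ‖z‖ → f z = 0) : tsupport f ⊆ closedBall 0 R :=
  closure_minimal (fun z hz ↦ by simpa using not_lt.1 (mt (hf z) hz)) isClosed_closedBall

variable {V : Type*} [NormedAddCommGroup V] [InnerProductSpace ℝ V] [CompleteSpace V]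

theorem hasGradientAt_norm {z : V} (hz : z ≠ 0) : HasGradientAt (‖·‖) (‖z‖⁻¹ • z) z := by
  have hnorm : ‖z‖ ≠ 0 := norm_ne_zero_iff.2 hz
  have hsqrt := (hasStrictFDerivAt_norm_sq z).hasFDerivAt.sqrt (pow_ne_zero 2 hnorm)
  simp only [Real.sqrt_sq (norm_nonneg _)] at hsqrt
  refine hasGradientAt_iff_hasFDerivAt.2 (hsqrt.congr_fderiv ?_)
  ext v
  simp only [_root_.smul_apply, nsmul_eq_mul, smul_eq_mul, innerSL_apply_apply, toDual_apply_apply,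
    real_inner_smul_left]
  field_simp
  norm_num

theorem hasGradientAt_comp_norm {φ : ℝ → ℝ} {z : V} (hφ : DifferentiableAt ℝ φ ‖z‖)
    (hφ₀ : deriv φ 0 = 0) :
    HasGradientAt (fun y ↦ φ ‖y‖) ((‖z‖⁻¹ * deriv φ ‖z‖) • z) z := by
  rcases eq_or_ne z 0 with rfl | hz
  · have hderiv := hφ.hasDerivAt
    rw [norm_zero, hφ₀, hasDerivAt_iff_isLittleO_nhds_zero] at hderiv
    rw [smul_zero, hasGradientAt_iff_hasFDerivAt, map_zero, hasFDerivAt_iff_isLittleO_nhds_zero]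
    simpa [comp_def] using (hderiv.comp_tendsto (tendsto_norm_zero (E := V))).of_norm_right
  · refine hasGradientAt_iff_hasFDerivAt.2
      ((hφ.hasDerivAt.comp_hasFDerivAt z (hasGradientAt_norm hz).hasFDerivAt).congr_fderiv ?_)
    simp [mul_comm, mul_smul]

theorem contDiff_one_comp_norm {φ : ℝ → ℝ} (hφ : ContDiff ℝ 1 φ) (hφ₀ : deriv φ =ᶠ[𝓝 0] 0) :
    ContDiff ℝ 1 fun z : V ↦ φ ‖z‖ := by
  refine contDiff_one_iff_hasFDerivAt.2 ⟨_, ?_, fun z ↦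
    (hasGradientAt_comp_norm (hφ.differentiable one_ne_zero _) hφ₀.eq_of_nhds).hasFDerivAt⟩
  exact (toDual ℝ V).continuous.comp
    ((continuous_inv_norm_mul_comp_norm (hφ.continuous_deriv le_rfl) hφ₀).smul continuous_id)

end RadialFunctions

section Laplacian

variable {V F : Type*} [NormedAddCommGroup V] [InnerProductSpace ℝ V] [FiniteDimensional ℝ V]

theorem fderiv_apply_gradient_eq_sum {ι : Type*} [Fintype ι] (b : OrthonormalBasis ι ℝ V)
    (f : V → ℝ) {g : V → ℝ} {z : V} (hg : DifferentiableAt ℝ g z) :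
    fderiv ℝ f z (∇ g z) = ∑ i, fderiv ℝ f z (b i) * fderiv ℝ g z (b i) := by
  conv_lhs => rw [← b.sum_repr' (∇ g z)]
  simp only [map_sum, map_smul, smul_eq_mul, hg.hasGradientAt.fderiv_apply]
  exact Finset.sum_congr rfl fun i _ ↦ by rw [real_inner_comm, mul_comm]

theorem laplacian_eq_sum_fderiv_fderiv_apply [NormedAddCommGroup F] [NormedSpace ℝ F]
    {ι : Type*} [Fintype ι] (b : OrthonormalBasis ι ℝ V) {f : V → F} {z : V}
    (hf : ContDiffAt ℝ 2 f z) :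
    Δ f z = ∑ i, fderiv ℝ (fun y ↦ fderiv ℝ f y (b i)) z (b i) := by
  have hdf : DifferentiableAt ℝ (fderiv ℝ f) z :=
    (hf.fderiv_right (m := 1) le_rfl).differentiableAt one_ne_zero
  simp only [laplacian_eq_iteratedFDeriv_orthonormalBasis f b, iteratedFDeriv_two_apply]
  refine Finset.sum_congr rfl fun i _ ↦ ?_
  simp [fderiv_clm_apply hdf (differentiableAt_const (b i))]

theorem laplacian_comp_add_smul [NormedAddCommGroup F] [NormedSpace ℝ F] (f : V → F) (x : V)
    (r : ℝ) (z : V) : Δ (fun y ↦ f (x + r • y)) z = r ^ 2 • Δ f (x + r • z) := by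
  have hfderiv : fderiv ℝ (fun y ↦ f (x + r • y)) = fun y ↦ r • fderiv ℝ f (x + r • y) := by
    ext1 y
    rw [fderiv_comp_smul (f := fun y ↦ f (x + y)), fderiv_comp_add_left]
  have hfderiv₂ : fderiv ℝ (fderiv ℝ fun y ↦ f (x + r • y)) z =
      r ^ 2 • fderiv ℝ (fderiv ℝ f) (x + r • z) := by
    have hsmul := congr_fun (fderiv_const_smul_field (𝕜 := ℝ) r
      (f := fun y ↦ fderiv ℝ f (x + r • y))) z
    rw [hfderiv, ← Pi.smul_def, hsmul, Pi.smul_apply,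
      fderiv_comp_smul (f := fun y ↦ fderiv ℝ f (x + y)),
      fderiv_comp_add_left, smul_smul, sq]
  simp only [laplacian_eq_iteratedFDeriv_stdOrthonormalBasis, iteratedFDeriv_two_apply, hfderiv₂,
    Finset.smul_sum, _root_.smul_apply]

theorem laplacian_norm_sq [NormedAddCommGroup F] [InnerProductSpace ℝ F]
    {ι : Type*} [Fintype ι] (b : OrthonormalBasis ι ℝ V) {u : V → F} {y : V}
    (hu : ContDiffAt ℝ 2 u y) :
    Δ (fun y ↦ ‖u y‖ ^ 2) y = 2 * (∑ i, ‖fderiv ℝ u y (b i)‖ ^ 2 + ⟪u y, Δ u y⟫_ℝ) := by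
  have hdu : DifferentiableAt ℝ (fderiv ℝ u) y :=
    (hu.fderiv_right (m := 1) le_rfl).differentiableAt one_ne_zero
  have hfderiv (i : ι) : (fun z ↦ fderiv ℝ (fun y ↦ ‖u y‖ ^ 2) z (b i)) =ᶠ[𝓝 y]
      fun z ↦ 2 * ⟪u z, fderiv ℝ u z (b i)⟫_ℝ := by
    filter_upwards [hu.eventually (by simp)] with z hz
    simp [(hz.differentiableAt two_ne_zero).hasFDerivAt.norm_sq.fderiv]
  have hfderiv₂ (i : ι) : fderiv ℝ (fun z ↦ fderiv ℝ (fun y ↦ ‖u y‖ ^ 2) z (b i)) y (b i) =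
      2 * (‖fderiv ℝ u y (b i)‖ ^ 2 +
        ⟪u y, fderiv ℝ (fun z ↦ fderiv ℝ u z (b i)) y (b i)⟫_ℝ) := by
    have hinner := (hu.differentiableAt two_ne_zero).hasFDerivAt.inner ℝ
      (hdu.clm_apply (differentiableAt_const (b i))).hasFDerivAt
    rw [(hfderiv i).fderiv_eq, (hinner.const_mul 2).fderiv]
    simp [add_comm]
  rw [laplacian_eq_sum_fderiv_fderiv_apply b (hu.norm_sq ℝ),
    laplacian_eq_sum_fderiv_fderiv_apply b hu, inner_sum, ← Finset.sum_add_distrib, Finset.mul_sum]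
  exact Finset.sum_congr rfl fun i _ ↦ hfderiv₂ i

theorem laplacian_norm_sq_nonneg [NormedAddCommGroup F] [InnerProductSpace ℝ F] {u : V → F} {y : V}
    (hu : HarmonicAt u y) : 0 ≤ Δ (fun y ↦ ‖u y‖ ^ 2) y := by
  rw [laplacian_norm_sq (stdOrthonormalBasis ℝ V) hu.1, hu.2.eq_of_nhds, Pi.zero_apply,
    inner_zero_right]
  positivity

end Laplacian

section IntegralIdentities

theorem hasDerivAt_integral_comp_add_smul_mul {V : Type*} [NormedAddCommGroup V] [NormedSpace ℝ V]
    [MeasurableSpace V] [OpensMeasurableSpace V] {μ : Measure V} [IsFiniteMeasureOnCompacts μ]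
    {w k : V → ℝ} {x : V} {r : ℝ} (hw : ∀ z ∈ tsupport k, ContDiffAt ℝ 1 w (x + r • z))
    (hk : Continuous k) (hkc : HasCompactSupport k) :
    HasDerivAt (fun s ↦ ∫ z, w (x + s • z) * k z ∂μ)
      (∫ z, fderiv ℝ w (x + r • z) z * k z ∂μ) r := by
  have hw_near : ∀ᶠ s in 𝓝 r, ∀ z ∈ tsupport k, ContDiffAt ℝ 1 w (x + s • z) :=
    hkc.isCompact.eventually_forall_of_forall_eventually fun z hz ↦
      (show Continuous fun p : ℝ × V ↦ x + p.1 • p.2 by fun_prop).continuousAt.eventually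
        ((hw z hz).eventually (by simp))
  have hw_int {s : ℝ} (hs : ∀ z ∈ tsupport k, ContDiffAt ℝ 1 w (x + s • z)) :
      Integrable (fun z ↦ w (x + s • z) * k z) μ :=
    integrable_mul_of_continuousAt_tsupport
      (fun z hz ↦ (hs z hz).continuousAt.comp' (f := fun z ↦ x + s • z) (by fun_prop)) hk hkc
  have hdw (z : V) (hz : z ∈ tsupport k) :
      ContinuousAt (fun p : ℝ × V ↦ fderiv ℝ w (x + p.1 • p.2) p.2) (r, z) :=
    (((hw z hz).fderiv_right (m := 0) le_rfl).continuousAt.comp'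
      (f := fun p : ℝ × V ↦ x + p.1 • p.2) (by fun_prop)).clm_apply continuousAt_snd
  obtain ⟨C, hC⟩ := exists_eventually_forall_norm_le_of_isCompact hkc.isCompact
    (f := fun s z ↦ fderiv ℝ w (x + s • z) z) hdw
  refine (hasDerivAt_integral_of_dominated_loc_of_deriv_le (bound := fun z ↦ C * ‖k z‖)
    (hw_near.and hC) (hw_near.mono fun s hs ↦ (hw_int hs).aestronglyMeasurable)
    (hw_int hw_near.self_of_nhds) (F' := fun s z ↦ fderiv ℝ w (x + s • z) z * k z) ?_ ?_ ?_ ?_).2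
  · exact (integrable_mul_of_continuousAt_tsupport
      (fun z hz ↦ (hdw z hz).comp' (f := fun z ↦ (r, z)) (by fun_prop)) hk hkc).aestronglyMeasurable
  · refine .of_forall fun z s hs ↦ ?_
    by_cases hz : z ∈ tsupport k
    · rw [norm_mul]
      gcongr
      exact hs.2 z hz
    · simp [image_eq_zero_of_notMem_tsupport hz]
  · exact (hk.norm.integrable_of_hasCompactSupport hkc.norm).const_mul C
  · refine .of_forall fun z s hs ↦ ?_
    by_cases hz : z ∈ tsupport k
    · have hline : HasDerivAt (fun s : ℝ ↦ x + s • z) z s := by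
        simpa using ((hasDerivAt_id s).smul_const z).const_add x
      exact (((hs.1 z hz).differentiableAt one_ne_zero).hasFDerivAt.comp_hasDerivAt s
        hline).mul_const (k z)
    · simpa [image_eq_zero_of_notMem_tsupport hz] using hasDerivAt_const s (0 : ℝ)

variable {V : Type*} [NormedAddCommGroup V] [InnerProductSpace ℝ V] [FiniteDimensional ℝ V]
  [MeasurableSpace V] [BorelSpace V] {μ : Measure V} [μ.IsAddHaarMeasure]

theorem integral_fderiv_apply_gradient_eq_neg_integral_laplacian_mul {f g : V → ℝ}
    (hf : ∀ z ∈ tsupport g, ContDiffAt ℝ 2 f z) (hg : ContDiff ℝ 1 g) (hgc : HasCompactSupport g) :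
    ∫ z, fderiv ℝ f z (∇ g z) ∂μ = -∫ z, Δ f z * g z ∂μ := by
  let b := stdOrthonormalBasis ℝ V
  have hdf (i) (z) (hz : z ∈ tsupport g) : ContDiffAt ℝ 1 (fun y ↦ fderiv ℝ f y (b i)) z :=
    ((hf z hz).fderiv_right (m := 1) le_rfl).clm_apply contDiffAt_const
  have hint_left (i) : Integrable (fun z ↦ fderiv ℝ f z (b i) * fderiv ℝ g z (b i)) μ :=
    integrable_mul_of_continuousAt_tsupport
      (fun z hz ↦ (hdf i z (tsupport_fderiv_apply_subset ℝ (b i) hz)).continuousAt)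
      ((hg.continuous_fderiv one_ne_zero).clm_apply continuous_const) (hgc.fderiv_apply ℝ (b i))
  have hint_right (i) :
      Integrable (fun z ↦ fderiv ℝ (fun y ↦ fderiv ℝ f y (b i)) z (b i) * g z) μ :=
    integrable_mul_of_continuousAt_tsupport (fun z hz ↦
      (((hdf i z hz).fderiv_right (m := 0) le_rfl).clm_apply contDiffAt_const).continuousAt)
      hg.continuous hgc
  calc
    ∫ z, fderiv ℝ f z (∇ g z) ∂μ
      = ∑ i, ∫ z, fderiv ℝ f z (b i) * fderiv ℝ g z (b i) ∂μ := by
        rw [← integral_finsetSum _ fun i _ ↦ hint_left i]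
        simp only [fderiv_apply_gradient_eq_sum b f (hg.differentiable one_ne_zero _)]
    _ = ∑ i, -∫ z, fderiv ℝ (fun y ↦ fderiv ℝ f y (b i)) z (b i) * g z ∂μ := by
        refine Finset.sum_congr rfl fun i _ ↦
          integral_mul_fderiv_eq_neg_fderiv_mul_of_integrable (hint_right i) (hint_left i) ?_
            (fun z hz ↦ (hdf i z hz).differentiableAt one_ne_zero)
            fun z _ ↦ hg.differentiable one_ne_zero z
        exact integrable_mul_of_continuousAt_tsupport (fun z hz ↦ (hdf i z hz).continuousAt)
          hg.continuous hgc
    _ = -∫ z, Δ f z * g z ∂μ := by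
        rw [Finset.sum_neg_distrib, ← integral_finsetSum _ fun i _ ↦ hint_right i]
        congr 2 with z
        by_cases hz : z ∈ tsupport g
        · rw [laplacian_eq_sum_fderiv_fderiv_apply b (hf z hz), Finset.sum_mul]
        · simp [image_eq_zero_of_notMem_tsupport hz]

theorem integral_fderiv_comp_add_smul_apply_gradient {f g : V → ℝ} {x : V} {r : ℝ} (hr : r ≠ 0)
    (hf : ∀ z ∈ tsupport g, ContDiffAt ℝ 2 f (x + r • z)) (hg : ContDiff ℝ 1 g)
    (hgc : HasCompactSupport g) :
    ∫ z, fderiv ℝ f (x + r • z) (∇ g z) ∂μ = -(r * ∫ z, Δ f (x + r • z) * g z ∂μ) := by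
  have hgreen := integral_fderiv_apply_gradient_eq_neg_integral_laplacian_mul (μ := μ)
    (fun z hz ↦ (hf z hz).comp z (by fun_prop)) hg hgc
  simp only [comp_def, fderiv_comp_smul (f := fun y ↦ f (x + y)), fderiv_comp_add_left,
    laplacian_comp_add_smul, _root_.smul_apply, smul_eq_mul, mul_assoc, integral_const_mul]
    at hgreen
  rw [← mul_right_inj' hr, hgreen]
  ring

end IntegralIdentities

section SmoothedHeight

variable {V : Type*} [NormedAddCommGroup V]

/-- The smoothed height `-∫ w(y) |y - x|⁻¹ φ'(|y - x| / r) dμ(y)` of a density `w`; the paper's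
`H_φ(x, r)` is the case `w = |u|²`. -/
def smoothedHeight [MeasurableSpace V] (μ : Measure V) (φ : ℝ → ℝ) (w : V → ℝ) (x : V) (r : ℝ) :
    ℝ :=
  -∫ y, w y * ‖y - x‖⁻¹ * deriv φ (‖y - x‖ / r) ∂μ

/-- The smoothed height rescaled to the unit ball: for `φ` nonincreasing this is, up to a constant,
a weighted average of the means of `w` over the spheres of radius at most `r` centred at `x`. -/
def smoothedMean [NormedSpace ℝ V] [MeasurableSpace V] (μ : Measure V) (φ : ℝ → ℝ) (w : V → ℝ)
    (x : V) (r : ℝ) : ℝ :=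
  -∫ z, w (x + r • z) * (‖z‖⁻¹ * deriv φ ‖z‖) ∂μ

variable [MeasurableSpace V] [BorelSpace V] {μ : Measure V} [μ.IsAddHaarMeasure] {φ : ℝ → ℝ}
  {w : V → ℝ} {x : V} {r R : ℝ}

theorem smoothedHeight_eq_pow_mul_smoothedMean [NormedSpace ℝ V] [FiniteDimensional ℝ V]
    [Nontrivial V] (hr : 0 < r) :
    smoothedHeight μ φ w x r = r ^ (Module.finrank ℝ V - 1) * smoothedMean μ φ w x r := by
  let h : V → ℝ := fun y ↦ w (x + y) * ‖y‖⁻¹ * deriv φ (‖y‖ / r)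
  have htranslate : smoothedHeight μ φ w x r = -∫ y, h y ∂μ := by
    rw [smoothedHeight, ← integral_add_left_eq_self _ x]
    simp only [add_sub_cancel_left, h]
  have hscale : ∫ z, h (r • z) ∂μ = -(r⁻¹ * smoothedMean μ φ w x r) := by
    rw [smoothedMean, mul_neg, neg_neg, ← integral_const_mul]
    congr 1 with z
    simp only [h, norm_smul, Real.norm_of_nonneg hr.le, mul_inv, mul_div_cancel_left₀ _ hr.ne']
    ring
  rw [Measure.integral_comp_smul_of_nonneg _ _ _ (hR := hr.le), smul_eq_mul,
    inv_mul_eq_iff_eq_mul₀ (by positivity)] at hscale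
  obtain ⟨n, hn⟩ := Nat.exists_eq_succ_of_ne_zero (Module.finrank_pos (R := ℝ) (M := V)).ne'
  rw [htranslate, hscale, hn, Nat.succ_sub_one, pow_succ]
  field_simp

variable [InnerProductSpace ℝ V] [FiniteDimensional ℝ V]

theorem hasDerivAt_smoothedMean (hφ : ContDiff ℝ 1 φ) (hφ₀ : deriv φ =ᶠ[𝓝 0] 0)
    (hφ₁ : ∀ t, 1 ≤ t → φ t = 0) (hr : 0 < r)
    (hw : ∀ y ∈ closedBall x r, ContDiffAt ℝ 2 w y) :
    HasDerivAt (smoothedMean μ φ w x) (r * ∫ z, Δ w (x + r • z) * φ ‖z‖ ∂μ) r := by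
  let k : V → ℝ := fun z ↦ ‖z‖⁻¹ * deriv φ ‖z‖
  let Φ : V → ℝ := fun z ↦ φ ‖z‖
  have hk : Continuous k :=
    continuous_inv_norm_mul_comp_norm (hφ.continuous_deriv le_rfl) hφ₀
  have hk_supp : tsupport k ⊆ closedBall 0 1 :=
    tsupport_subset_closedBall_of_eq_zero_of_lt_norm fun z hz ↦ by
      have hφz : φ =ᶠ[𝓝 ‖z‖] fun _ ↦ 0 :=
        (eventually_gt_nhds hz).mono fun t ht ↦ hφ₁ t ht.le
      simp only [k, hφz.deriv_eq, deriv_const, mul_zero]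
  have hΦ_supp : tsupport Φ ⊆ closedBall 0 1 :=
    tsupport_subset_closedBall_of_eq_zero_of_lt_norm fun z hz ↦ hφ₁ _ hz.le
  have hcompact {f : V → ℝ} (hf : tsupport f ⊆ closedBall 0 1) : HasCompactSupport f :=
    (isCompact_closedBall 0 1).of_isClosed_subset (isClosed_tsupport f) hf
  have hw' (z : V) (hz : z ∈ closedBall 0 1) : ContDiffAt ℝ 2 w (x + r • z) :=
    hw _ (by simpa [norm_smul, abs_of_pos hr, mul_le_iff_le_one_right hr] using hz)
  have hΦ_grad (z : V) : ∇ Φ z = k z • z :=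
    (hasGradientAt_comp_norm (hφ.differentiable one_ne_zero _) hφ₀.eq_of_nhds).gradient
  refine (hasDerivAt_integral_comp_add_smul_mul
    (fun z hz ↦ (hw' z (hk_supp hz)).of_le one_le_two) hk (hcompact hk_supp)).neg.congr_deriv ?_
  calc
    -∫ z, fderiv ℝ w (x + r • z) z * k z ∂μ = -∫ z, fderiv ℝ w (x + r • z) (∇ Φ z) ∂μ := by
      simp only [hΦ_grad, map_smul, smul_eq_mul, mul_comm]
    _ = r * ∫ z, Δ w (x + r • z) * Φ z ∂μ := by
      rw [integral_fderiv_comp_add_smul_apply_gradient hr.ne' (fun z hz ↦ hw' z (hΦ_supp hz))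
        (contDiff_one_comp_norm hφ hφ₀) (hcompact hΦ_supp), neg_neg]

theorem monotoneOn_smoothedMean (hφ : ContDiff ℝ 1 φ) (hφ₀ : deriv φ =ᶠ[𝓝 0] 0)
    (hφ_nonneg : ∀ t, 0 ≤ φ t) (hφ₁ : ∀ t, 1 ≤ t → φ t = 0)
    (hw : ∀ y ∈ closedBall x R, ContDiffAt ℝ 2 w y) (hΔw : ∀ y ∈ closedBall x R, 0 ≤ Δ w y) :
    MonotoneOn (smoothedMean μ φ w x) (Set.Ioc 0 R) := by
  have hderiv (r : ℝ) (hr : r ∈ Set.Ioc 0 R) :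
      HasDerivAt (smoothedMean μ φ w x) (r * ∫ z, Δ w (x + r • z) * φ ‖z‖ ∂μ) r :=
    hasDerivAt_smoothedMean hφ hφ₀ hφ₁ hr.1 fun y hy ↦ hw y (closedBall_subset_closedBall hr.2 hy)
  have hderiv_nonneg (r : ℝ) (hr : r ∈ Set.Ioc 0 R) :
      0 ≤ r * ∫ z, Δ w (x + r • z) * φ ‖z‖ ∂μ := by
    refine mul_nonneg hr.1.le (integral_nonneg fun z ↦ ?_)
    rcases le_total 1 ‖z‖ with hz | hz
    · simp [hφ₁ _ hz]
    · refine mul_nonneg (hΔw _ ?_) (hφ_nonneg _)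
      rw [add_mem_closedBall_iff_norm, norm_smul, Real.norm_of_nonneg hr.1.le]
      exact (mul_le_of_le_one_right hr.1.le hz).trans hr.2
  have hderiv_interior {r : ℝ} (hr : r ∈ interior (Set.Ioc 0 R)) := hderiv r (interior_subset hr)
  refine monotoneOn_of_deriv_nonneg (convex_Ioc 0 R)
    (fun r hr ↦ (hderiv r hr).continuousAt.continuousWithinAt)
    (fun r hr ↦ (hderiv_interior hr).differentiableAt.differentiableWithinAt) fun r hr ↦ ?_
  rw [(hderiv_interior hr).deriv]
  exact hderiv_nonneg r (interior_subset hr)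

theorem monotoneOn_smoothedHeight_div_pow [Nontrivial V] (hφ : ContDiff ℝ 1 φ)
    (hφ₀ : deriv φ =ᶠ[𝓝 0] 0) (hφ_nonneg : ∀ t, 0 ≤ φ t) (hφ₁ : ∀ t, 1 ≤ t → φ t = 0)
    (hw : ∀ y ∈ closedBall x R, ContDiffAt ℝ 2 w y) (hΔw : ∀ y ∈ closedBall x R, 0 ≤ Δ w y) :
    MonotoneOn (fun r ↦ smoothedHeight μ φ w x r / r ^ (Module.finrank ℝ V - 1)) (Set.Ioc 0 R) :=
  (monotoneOn_smoothedMean (μ := μ) hφ hφ₀ hφ_nonneg hφ₁ hw hΔw).congr fun r hr ↦ by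
    simp only [smoothedHeight_eq_pow_mul_smoothedMean hr.1,
      mul_div_cancel_left₀ _ (pow_ne_zero _ hr.1.ne')]

end SmoothedHeight

theorem div_pow_mul_le_of_monotoneOn_div_pow {𝕜 : Type*} [Field 𝕜] [LinearOrder 𝕜]
    [IsStrictOrderedRing 𝕜] {f : 𝕜 → 𝕜} {k : ℕ} {I : Set 𝕜}
    (hf : MonotoneOn (fun t ↦ f t / t ^ k) I) {s r : 𝕜} (hs : s ∈ I) (hr : r ∈ I) (hs₀ : 0 < s)
    (hsr : s ≤ r) : (r / s) ^ k * f s ≤ f r :=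
  calc
    (r / s) ^ k * f s = f s / s ^ k * r ^ k := by ring
    _ ≤ f r := (le_div_iff₀ (pow_pos (hs₀.trans_le hsr) k)).1 (hf hs hr hsr)

theorem nonneg_of_antitone_of_eq_zero {α β : Type*} [LinearOrder α] [Preorder β] [Zero β]
    {φ : α → β} {a : α} (hφ : Antitone φ) (hφ₀ : ∀ t, a ≤ t → φ t = 0) (t : α) : 0 ≤ φ t := by
  rw [← hφ₀ (max t a) (le_max_right t a)]
  exact hφ (le_max_left t a)

theorem deriv_eventuallyEq_zero_of_eq_const {F : Type*} [NormedAddCommGroup F] [NormedSpace ℝ F]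
    {φ : ℝ → F} {c : F} {a t : ℝ} (hφ : ∀ s ≤ a, φ s = c) (ht : t < a) : deriv φ =ᶠ[𝓝 t] 0 := by
  have hconst : φ =ᶠ[𝓝 t] fun _ ↦ c := (eventually_lt_nhds ht).mono fun s hs ↦ hφ s hs.le
  simpa [Pi.zero_def] using hconst.deriv

theorem IsHarmonicOn.harmonicOnNhd {F : Type*} [NormedAddCommGroup F] [InnerProductSpace ℝ F]
    {u : E4 → F} {Ω : Set E4} (hu : IsHarmonicOn u Ω) (hΩ : IsOpen Ω) : HarmonicOnNhd u Ω := by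
  intro y hy
  refine ⟨(hu.1.contDiffAt (hΩ.mem_nhds hy)).of_le (WithTop.coe_le_coe.2 le_top), ?_⟩
  filter_upwards [hΩ.mem_nhds hy] with z hz
  simpa [laplacian_eq_iteratedFDeriv_orthonormalBasis u (EuclideanSpace.basisFun (Fin 4) ℝ)]
    using hu.2 z hz

theorem stmt_14_general {V F : Type*} [NormedAddCommGroup V] [InnerProductSpace ℝ V]
    [FiniteDimensional ℝ V] [Nontrivial V] [MeasurableSpace V] [BorelSpace V]
    [NormedAddCommGroup F] [InnerProductSpace ℝ F] (μ : Measure V) [μ.IsAddHaarMeasure]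
    {φ : ℝ → ℝ} (hφ : ContDiff ℝ 1 φ) (hφ₀ : deriv φ =ᶠ[𝓝 0] 0) (hφ_nonneg : ∀ t, 0 ≤ φ t)
    (hφ₁ : ∀ t, 1 ≤ t → φ t = 0) {u : V → F} {x : V} {R : ℝ}
    (hu : HarmonicOnNhd u (closedBall x R)) :
    MonotoneOn (fun r ↦ smoothedHeight μ φ (fun y ↦ ‖u y‖ ^ 2) x r /
      r ^ (Module.finrank ℝ V - 1)) (Set.Ioc 0 R) ∧
    ∀ s r : ℝ, 0 < s → s < r → r ≤ R →
      (r / s) ^ (Module.finrank ℝ V - 1) * smoothedHeight μ φ (fun y ↦ ‖u y‖ ^ 2) x s ≤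
        smoothedHeight μ φ (fun y ↦ ‖u y‖ ^ 2) x r := by
  have hmono := monotoneOn_smoothedHeight_div_pow (μ := μ) hφ hφ₀ hφ_nonneg hφ₁
    (fun y hy ↦ (hu y hy).1.norm_sq ℝ) fun y hy ↦ laplacian_norm_sq_nonneg (hu y hy)
  exact ⟨hmono, fun s r hs hsr hr ↦ div_pow_mul_le_of_monotoneOn_div_pow hmono
    ⟨hs, hsr.le.trans hr⟩ ⟨hs.trans hsr, hr⟩ hs hsr.le⟩

/-- Flat-case monotonicity of `H_φ(x,r)/r³` (flat analogue of Lemma 3.3). -/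
theorem stmt_14 (φ : ℝ → ℝ) (hφs : ContDiff ℝ (⊤ : ℕ∞) φ) (hφa : Antitone φ)
    (hφ1 : ∀ t ≤ (3/4 : ℝ), φ t = 1) (hφ0 : ∀ t, (1:ℝ) ≤ t → φ t = 0)
    (Ω : Set E4) (hΩ : IsOpen Ω) (u : E4 → E) (hu : IsHarmonicOn u Ω)
    (x : E4) (rb : ℝ) (hrb : 0 < rb) (hball : closedBall x rb ⊆ Ω) :
    MonotoneOn (fun t => Hphi φ u x t / t ^ 3) (Set.Ioo 0 rb) ∧
    ∀ s r : ℝ, 0 < s → s < r → r ≤ rb →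
      (r / s) ^ 3 * Hphi φ u x s ≤ Hphi φ u x r := by
  obtain ⟨hmono, hratio⟩ := stmt_14_general volume (hφs.of_le (mod_cast le_top))
    (deriv_eventuallyEq_zero_of_eq_const hφ1 (by norm_num))
    (nonneg_of_antitone_of_eq_zero hφa hφ0) hφ0 ((hu.harmonicOnNhd hΩ).mono hball)
  rw [finrank_euclideanSpace_fin] at hmono hratio
  exact ⟨hmono.mono Set.Ioo_subset_Ioc_self, hratio⟩
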